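/- Let P(a,c) := 759·a^8·c^{16} + 2576·a^{12}·c^{12} + 759·a^{16}·c^8 + a^{24} and Q(a,b,c) := 759·a^{16}·b^8 − 2576·a^{12}·b^{12} + 759·a^8·b^{16} − 1518·a^8·b^8·c^8, and F(a,b,c) := c^{24} + P(a,c) + P(b,c) + Q(a,b,c). Then the symmetrized weight enumerator of the extended quaternary Golay code C_2 (the lifted extended quadratic residue code of length 24 modulo 4) satisfies swe_{C_2}(x_0,x_1,z) = 2^{−12}·F(2x_0, z−x_1, z+x_1) in ℚ[x_0,x_1,z]. -/

import Mathlib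

/-!
The code `C₂` is free of rank 12 and reduces modulo 2 to the binary Golay code `G`, with
`2 C₂ = 2 G`. Splitting `C₂` into cosets of `2 G`, a codeword is `c + 2 q` with `c` a fixed lift of
its reduction and `q ∈ G`. Expand the local weight `phi` in characters of the translation
`v ↦ v + 2`: its two Fourier components are `psi`, with values `2 x₀`, `z - x₁` and `z + x₁`, which
explains the substitution in `F`. Summing over `q` and using `G = G^⊥` (`Good.poisson`),
the enumerator becomes `2⁻¹²` times a double sum over `c` and over dual words `u ∈ G`, in which only
pairs with `c mod 2` and `u` of disjoint supports contribute, each with a monomial and a sign.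

By the weights of `G`, words of `G` disjoint from a nonzero word are `0`, its complement, or
octads disjoint from an octad (`Good.disj_cases`). The sign at the complement is the parity of the
number of coordinates equal to 2, determined by the weight. For an octad the sign is
a nontrivial character on the words disjoint from it, so its total is zero, which yields the term
`-2 a⁸ b⁸ c⁸`. Hence the inner sum depends on the weight only (`Good.inner_sum`) and the weight
distribution of `G` gives the formula (`Good.swe_formula`).

The properties used are verified on the 4096 combinations of the rows with coefficients `0` and `1`
by bitmask arithmetic in the kernel (`good_a`, `good_b`). Two generator polynomials suffice:
`x ^ 23 - 1` has an explicit factorization over `ℤ/4ℤ` (`factor`), irreducibility of `g` leaves two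
possible reductions, and Hensel lifts are unique (`lift_unique`, `generator_cases`). Finally,
the code generated by such a polynomial is the row space of its shifts (`sum_code`).
-/

open MvPolynomial
open scoped Classical

noncomputable section

/-- The symmetrized weight enumerator of a code `C ⊆ (ℤ/Nℤ)^n` (for `N = p^m`):
the variable `X i` for `i < m` records the number of coordinates of `p`-adic valuation `i`,
and the last variable `X m` (the variable `z`) records the number of zero coordinates. -/
def swe (p m : ℕ) {N n : ℕ} [NeZero N]
    (C : Submodule (ZMod N) (Fin n → ZMod N)) : MvPolynomial (Fin (m + 1)) ℚ :=
  ∑ c : Fin n → ZMod N, if c ∈ C then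
      (∏ i : Fin m, (X (Fin.castSucc i) : MvPolynomial (Fin (m + 1)) ℚ) ^
          (Finset.univ.filter fun j => c j ≠ 0 ∧ padicValNat p (c j).val = (i : ℕ)).card)
        * (X (Fin.last m) : MvPolynomial (Fin (m + 1)) ℚ) ^
            (Finset.univ.filter fun j => c j = 0).card
    else 0

/-- `g` is a monic irreducible degree-11 factor of `x^23 - 1` over `ℤ/pℤ`. -/
def IsQRFactor (p : ℕ) (g : Polynomial (ZMod p)) : Prop :=
  g.Monic ∧ g.natDegree = 11 ∧ Irreducible g ∧ g ∣ (Polynomial.X ^ 23 - 1)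

/-- `gm` is the (Hensel) lift of `g` to `ℤ/Nℤ` and `C` is the associated lifted extended
cyclic quadratic residue code of length 24: the extension by an overall parity check of the
cyclic code of length 23 generated by `gm`. -/
def IsLiftedQR {p N : ℕ} (hpN : p ∣ N) (g : Polynomial (ZMod p)) (gm : Polynomial (ZMod N))
    (C : Submodule (ZMod N) (Fin 24 → ZMod N)) : Prop :=
  gm.Monic ∧ gm.natDegree = 11 ∧ gm ∣ (Polynomial.X ^ 23 - 1) ∧
    gm.map (ZMod.castHom hpN (ZMod p)) = g ∧
    ∀ c : Fin 24 → ZMod N, c ∈ C ↔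
      ((∃ f : Polynomial (ZMod N), ∀ j : Fin 23,
          c (Fin.castSucc j) = ((f * gm) %ₘ (Polynomial.X ^ 23 - 1)).coeff (j : ℕ)) ∧
        c (Fin.last 23) = - ∑ j : Fin 23, c (Fin.castSucc j))

/-- `P(a,c)` from the statement. -/
def Pb {σ : Type*} (a c : MvPolynomial σ ℚ) : MvPolynomial σ ℚ :=
  759 * a ^ 8 * c ^ 16 + 2576 * a ^ 12 * c ^ 12 + 759 * a ^ 16 * c ^ 8 + a ^ 24

/-- `Q(a,b,c)` from the statement. -/
def Qb {σ : Type*} (a b c : MvPolynomial σ ℚ) : MvPolynomial σ ℚ :=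
  759 * a ^ 16 * b ^ 8 - 2576 * a ^ 12 * b ^ 12 + 759 * a ^ 8 * b ^ 16
    - 1518 * a ^ 8 * b ^ 8 * c ^ 8

/-- `F(a,b,c)` from the statement. -/
def Fb {σ : Type*} (a b c : MvPolynomial σ ℚ) : MvPolynomial σ ℚ :=
  c ^ 24 + Pb a c + Pb b c + Qb a b c

namespace QGolay

/-! ### Partial Fourier expansion and Poisson summation -/

/-- Words of length 24 over `ℤ/4ℤ`. -/
abbrev V4 := Fin 24 → ZMod 4

/-- Words of length 24 over `ℤ/2ℤ`. -/
abbrev V2 := Fin 24 → ZMod 2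

/-- Reduction `ℤ/4ℤ → ℤ/2ℤ`. -/
abbrev red : ZMod 4 →+* ZMod 2 := ZMod.castHom (by norm_num : (2 : ℕ) ∣ 4) (ZMod 2)

/-- The set-theoretic section `0 ↦ 0`, `1 ↦ 1` of `red`. -/
def lf (x : ZMod 2) : ZMod 4 := if x = 0 then 0 else 1

lemma red_lf (x : ZMod 2) : red (lf x) = x := by
  revert x; decide

section Fourier

variable {K : Type*} [CommRing K]

/-- The nontrivial character of `ℤ/2ℤ`, with values in `K`. -/
def sgn (K : Type*) [CommRing K] (x : ZMod 2) : K := if x = 0 then 1 else -1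

lemma zmod2_cases (x : ZMod 2) : x = 0 ∨ x = 1 := by
  revert x; decide

lemma zmod4_cases (x : ZMod 4) : x = 0 ∨ x = 1 ∨ x = 2 ∨ x = 3 := by
  revert x; decide

lemma sgn_zero : sgn K 0 = 1 := by simp [sgn]

lemma sgn_one : sgn K 1 = -1 := by simp [sgn]

lemma sgn_add (x y : ZMod 2) : sgn K (x + y) = sgn K x * sgn K y := by
  have h : (1 + 1 : ZMod 2) = 0 := by decide
  rcases zmod2_cases x with rfl | rfl <;> rcases zmod2_cases y with rfl | rfl <;>
    simp [sgn_zero, sgn_one, h]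

lemma sgn_sum {ι : Type*} (s : Finset ι) (f : ι → ZMod 2) :
    sgn K (∑ i ∈ s, f i) = ∏ i ∈ s, sgn K (f i) := by
  induction s using Finset.cons_induction with
  | empty => simp [sgn_zero]
  | cons a s ha ih => rw [Finset.sum_cons, Finset.prod_cons, sgn_add, ih]

/-- Orthogonality of the characters of `(ℤ/2ℤ)^ι`. -/
lemma char_sum {ι : Type*} [Fintype ι] [DecidableEq ι] (s : ι → ZMod 2) :
    ∑ q : ι → ZMod 2, sgn K (∑ i, q i * s i) =
      if s = 0 then (2 : K) ^ Fintype.card ι else 0 := by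
  have h1 : ∀ i, ∑ x : ZMod 2, sgn K (x * s i) = if s i = 0 then 2 else 0 := by
    intro i
    have : ∑ x : ZMod 2, sgn K (x * s i) = sgn K (0 * s i) + sgn K (1 * s i) :=
      Fin.sum_univ_two (fun x : ZMod 2 => sgn K (x * s i))
    rw [this]
    rcases zmod2_cases (s i) with h | h <;> rw [h] <;> simp [sgn_zero, sgn_one]
    norm_num
  simp_rw [sgn_sum]
  have h2 := Finset.prod_univ_sum (fun _ : ι => (Finset.univ : Finset (ZMod 2)))
    (fun i x => sgn K (x * s i))
  rw [Fintype.piFinset_univ] at h2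
  rw [← h2]
  simp_rw [h1]
  split_ifs with h
  · subst h; simp
  · obtain ⟨i, hi⟩ := Function.ne_iff.mp h
    exact Finset.prod_eq_zero (Finset.mem_univ i) (if_neg (by simpa using hi))

/-- The local weight of a coordinate in the symmetrized weight enumerator. -/
def phi (x₀ x₁ z : K) (v : ZMod 4) : K := if v = 0 then z else if v = 2 then x₁ else x₀

/-- The local weights of the Fourier expansion: `u` is the dual variable of the translation
`v ↦ v + 2`. -/
def psi (a b d : K) (v : ZMod 4) (u : ZMod 2) : K :=
  if red v = 0 then (if u = 0 then d else if v = 0 then b else -b)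
  else (if u = 0 then a else 0)

lemma red_zero : red (0 : ZMod 4) = 0 := by decide
lemma red_one : red (1 : ZMod 4) = 1 := by decide
lemma red_two : red (2 : ZMod 4) = 0 := by decide
lemma red_three : red (3 : ZMod 4) = 1 := by decide

lemma two_phi (x₀ x₁ z : K) (v : ZMod 4) :
    2 * phi x₀ x₁ z v = ∑ u : ZMod 2, psi (2 * x₀) (z - x₁) (z + x₁) v u := by
  have : ∑ u : ZMod 2, psi (2 * x₀) (z - x₁) (z + x₁) v u =
      psi (2 * x₀) (z - x₁) (z + x₁) v 0 + psi (2 * x₀) (z - x₁) (z + x₁) v 1 :=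
    Fin.sum_univ_two _
  rw [this]
  have h1 : (1 : ZMod 4) ≠ 0 := by decide
  have h12 : (1 : ZMod 4) ≠ 2 := by decide
  have h2 : (2 : ZMod 4) ≠ 0 := by decide
  have h3 : (3 : ZMod 4) ≠ 0 := by decide
  have h32 : (3 : ZMod 4) ≠ 2 := by decide
  rcases zmod4_cases v with rfl | rfl | rfl | rfl
  · simp only [phi, psi, red_zero, if_true, one_ne_zero, if_false]; ring
  · simp only [phi, psi, red_one, if_true, one_ne_zero, if_false, h1, h12]; ring
  · simp only [phi, psi, red_two, if_true, one_ne_zero, if_false, h2]; ring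
  · simp only [phi, psi, red_three, if_true, one_ne_zero, if_false, h3, h32]; ring

lemma psi_shift (a b d : K) (v w : ZMod 4) (u : ZMod 2) :
    psi a b d (v + 2 * w) u = sgn K (red w * u) * psi a b d v u := by
  have key : ∀ v w : ZMod 4, red (v + 2 * w) = red v ∧
      (red v = 0 → ((v + 2 * w = 0 ↔ v = 0) ↔ red w = 0)) := by decide
  obtain ⟨k1, k2⟩ := key v w
  unfold psi
  rw [k1]
  rcases zmod2_cases u with rfl | rfl
  · simp [sgn_zero]
  · simp only [one_ne_zero, if_false, mul_one]
    split_ifs with h1 h2 h3 h3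
    · have : red w = 0 := (k2 h1).1 (by tauto)
      rw [this, sgn_zero, one_mul]
    · have : red w = 1 := by
        rcases zmod2_cases (red w) with h | h
        · exact absurd ((k2 h1).2 h) (by tauto)
        · exact h
      rw [this, sgn_one]; ring
    · have : red w = 1 := by
        rcases zmod2_cases (red w) with h | h
        · exact absurd ((k2 h1).2 h) (by tauto)
        · exact h
      rw [this, sgn_one]; ring
    · have : red w = 0 := (k2 h1).1 (by tauto)
      rw [this, sgn_zero, one_mul]
    · simp

lemma prod_boole {ι : Type*} [Fintype ι] (P : ι → Prop) [DecidablePred P] (a : K) :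
    ∏ j, (if P j then a else 1) = a ^ (Finset.univ.filter P).card := by
  rw [Finset.prod_ite]; simp

/-- Changing the local weights only introduces monomial factors. -/
lemma psi_eq (a b d : K) (v : ZMod 4) (u : ZMod 2) :
    psi a b d v u = psi 1 1 1 v u * ((if red v ≠ 0 then a else 1) * (if u ≠ 0 then b else 1) *
      (if red v = 0 ∧ u = 0 then d else 1)) := by
  unfold psi
  split_ifs <;> simp_all

/-- Hamming weight of a binary word. -/
def wt (x : V2) : ℕ := (Finset.univ.filter fun j => x j ≠ 0).card

/-- The two binary words have disjoint supports. -/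
def Disj (s u : V2) : Prop := ∀ j, s j = 0 ∨ u j = 0

lemma wt_add {s u : V2} (h : Disj s u) : wt (s + u) = wt s + wt u := by
  unfold wt
  rw [← Finset.card_union_of_disjoint]
  · congr 1
    ext j
    have : ∀ x y : ZMod 2, (x = 0 ∨ y = 0) → (x + y ≠ 0 ↔ x ≠ 0 ∨ y ≠ 0) := by decide
    simpa using this _ _ (h j)
  · rw [Finset.disjoint_filter]
    intro j _ h1 h2
    exact (h j).elim h1 h2

lemma wt_le (s : V2) : wt s ≤ 24 := by
  simpa [wt] using Finset.card_filter_le (Finset.univ : Finset (Fin 24)) fun j => s j ≠ 0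

lemma eq_zero_of_wt {s : V2} (h : wt s = 0) : s = 0 := by
  funext j
  by_contra hj
  have : j ∈ (Finset.univ.filter fun j => s j ≠ 0) := by simpa using hj
  rw [Finset.card_eq_zero.mp h] at this
  simp at this

lemma wt_zero : wt 0 = 0 := by simp [wt]

lemma eq_one_of_wt {s : V2} (h : wt s = 24) : s = 1 := by
  have h2 : (Finset.univ.filter fun j => s j ≠ 0) = Finset.univ :=
    Finset.eq_univ_of_card _ (h.trans (Fintype.card_fin 24).symm)
  funext j
  have : j ∈ (Finset.univ.filter fun j => s j ≠ 0) := by rw [h2]; simp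
  exact (zmod2_cases (s j)).resolve_left (by simpa using this)

lemma card_both {s u : V2} (h : Disj s u) :
    wt s + wt u + (Finset.univ.filter fun j => s j = 0 ∧ u j = 0).card = 24 := by
  rw [← wt_add h]
  unfold wt
  have := Finset.card_filter_add_card_filter_not (s := (Finset.univ : Finset (Fin 24)))
    (fun j => (s + u) j ≠ 0)
  rw [Finset.card_univ, Fintype.card_fin] at this
  refine Eq.trans ?_ this
  congr 2
  ext j
  have : ∀ x y : ZMod 2, (x = 0 ∨ y = 0) → (x = 0 ∧ y = 0 ↔ ¬ x + y ≠ 0) := by decide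
  simpa using this _ _ (h j)

/-- Reduction of a word modulo 2. -/
def redV (c : V4) : V2 := fun j => red (c j)

/-- The product of the local weights along the word `c`, at the dual word `u`. -/
def Psi (a b d : K) (c : V4) (u : V2) : K := ∏ j, psi a b d (c j) (u j)

lemma Psi_of_not_disj (a b d : K) {c : V4} {u : V2} (h : ¬ Disj (redV c) u) :
    Psi a b d c u = 0 := by
  simp only [Disj, not_forall, not_or] at h
  obtain ⟨j, h1, h2⟩ := h
  refine Finset.prod_eq_zero (Finset.mem_univ j) ?_
  unfold psi
  exact (if_neg h1).trans (if_neg h2)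

lemma Psi_of_disj (a b d : K) {c : V4} {u : V2} (h : Disj (redV c) u) :
    Psi a b d c u = Psi 1 1 1 c u *
      (a ^ wt (redV c) * b ^ wt u * d ^ (24 - wt (redV c) - wt u)) := by
  unfold Psi
  rw [Finset.prod_congr rfl fun j _ => psi_eq a b d (c j) (u j)]
  simp only [Finset.prod_mul_distrib, prod_boole]
  have := card_both h
  have e : 24 - wt (redV c) - wt u =
    (Finset.univ.filter fun j => redV c j = 0 ∧ u j = 0).card := by omega
  rw [e]
  rfl

lemma Psi_zero_right (c : V4) : Psi (1 : K) 1 1 c 0 = 1 := by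
  unfold Psi
  apply Finset.prod_eq_one
  intro j _
  simp [psi]

/-- For fixed `c`, the sign `Psi 1 1 1 c` is multiplicative against dual words avoiding the
support of `c` modulo 2. -/
lemma Psi_add_right {c : V4} {u₀ : V2} (h : Disj (redV c) u₀) (u : V2) :
    Psi (1 : K) 1 1 c (u + u₀) = Psi 1 1 1 c u * Psi 1 1 1 c u₀ := by
  unfold Psi
  rw [← Finset.prod_mul_distrib]
  refine Finset.prod_congr rfl fun j _ => ?_
  have hj := h j
  have e : (1 + 1 : ZMod 2) = 0 := by decide
  simp only [Pi.add_apply]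
  unfold redV at hj
  generalize u₀ j = y at *
  generalize u j = x at *
  rcases hj with h0 | rfl
  · unfold psi
    rw [if_pos h0, if_pos h0, if_pos h0]
    rcases zmod2_cases x with rfl | rfl <;> rcases zmod2_cases y with rfl | rfl <;>
      simp [e]
    split_ifs <;> simp
  · have e0 : psi (1 : K) 1 1 (c j) 0 = 1 := by simp [psi]
    rw [add_zero, e0, mul_one]

/-- At the complement of the support, the sign counts the coordinates equal to 2. -/
lemma Psi_compl (c : V4) :
    Psi (1 : K) 1 1 c (1 + redV c) = (-1) ^ (Finset.univ.filter fun j => c j = 2).card := by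
  rw [← prod_boole]
  refine Finset.prod_congr rfl fun j _ => ?_
  have h1 : (1 : ZMod 4) ≠ 0 := by decide
  have h12 : (1 : ZMod 4) ≠ 2 := by decide
  have h2 : (2 : ZMod 4) ≠ 0 := by decide
  have h02 : (0 : ZMod 4) ≠ 2 := by decide
  have h3 : (3 : ZMod 4) ≠ 0 := by decide
  have h32 : (3 : ZMod 4) ≠ 2 := by decide
  have e : (1 + 1 : ZMod 2) = 0 := by decide
  simp only [Pi.add_apply, Pi.one_apply, redV]
  rcases zmod4_cases (c j) with h | h | h | h <;> rw [h] <;>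
    simp only [psi, red_zero, red_one, red_two, red_three, h1, h12, h2, h02, h3, h32, e,
      if_true, if_false, one_ne_zero, add_zero]

end Fourier

/-! ### The weight enumerator of a code with twelve suitable generators -/

section Code

/-- The linear combination of the rows `ρ` with coefficients `m`. -/
def E (ρ : Fin 12 → V4) (m : Fin 12 → ZMod 4) : V4 := fun j => ∑ i, m i * ρ i j

/-- The combination of the rows `ρ` with coefficients `0` and `1` prescribed by `p`. -/
def ew (ρ : Fin 12 → V4) (p : Fin 12 → ZMod 2) : V4 := E ρ fun i => lf (p i)

/-- The combination of the rows `ρ` modulo 2. -/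
def enc (ρ : Fin 12 → V4) (p : Fin 12 → ZMod 2) : V2 := fun j => ∑ i, p i * red (ρ i j)

/-- The dual of the binary code spanned by the rows `ρ` modulo 2. -/
def dual (ρ : Fin 12 → V4) : Finset V2 :=
  Finset.univ.filter fun u => (fun i => ∑ j, u j * red (ρ i j)) = (0 : Fin 12 → ZMod 2)

/-- The finitely many properties of the rows on which the weight enumerator depends: the binary
code is self-orthogonal with the weight distribution of the Golay code; the number of coordinates
equal to 2 in a combination of the rows with coefficients 0 and 1 has the parity making its
Euclidean weight divisible by 8; and no lift of an octad has all its remaining coordinates equal to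
0, which is expressed by a codeword `p'` disjoint from the octad `p` and meeting the positions of 2
in an odd number of points. -/
structure Good (ρ : Fin 12 → V4) : Prop where
  orth : ∀ i k, ∑ j, red (ρ i j) * red (ρ k j) = 0
  wts : ∀ p, wt (enc ρ p) = 0 ∨ wt (enc ρ p) = 8 ∨ wt (enc ρ p) = 12 ∨ wt (enc ρ p) = 16 ∨
    wt (enc ρ p) = 24
  cnt0 : (Finset.univ.filter fun p => wt (enc ρ p) = 0).card = 1
  cnt8 : (Finset.univ.filter fun p => wt (enc ρ p) = 8).card = 759
  cnt12 : (Finset.univ.filter fun p => wt (enc ρ p) = 12).card = 2576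
  cnt16 : (Finset.univ.filter fun p => wt (enc ρ p) = 16).card = 759
  cnt24 : (Finset.univ.filter fun p => wt (enc ρ p) = 24).card = 1
  par8 : ∀ p, wt (enc ρ p) = 8 → Even (Finset.univ.filter fun j => ew ρ p j = 2).card
  par12 : ∀ p, wt (enc ρ p) = 12 → Odd (Finset.univ.filter fun j => ew ρ p j = 2).card
  par16 : ∀ p, wt (enc ρ p) = 16 → Even (Finset.univ.filter fun j => ew ρ p j = 2).card
  oct : ∀ p, wt (enc ρ p) = 8 → ∃ p', Disj (enc ρ p) (enc ρ p') ∧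
    Psi (1 : ℤ) 1 1 (ew ρ p) (enc ρ p') = -1

variable {K : Type*} [CommRing K] {ρ : Fin 12 → V4}

lemma redV_ew (p : Fin 12 → ZMod 2) : redV (ew ρ p) = enc ρ p := by
  funext j
  simp only [redV, ew, E, enc, map_sum, map_mul, red_lf]

lemma enc_zero : enc ρ 0 = 0 := by
  funext j; simp [enc]

lemma enc_add (p q : Fin 12 → ZMod 2) : enc ρ (p + q) = enc ρ p + enc ρ q := by
  funext j; simp [enc, add_mul, Finset.sum_add_distrib]

lemma sum_mul_enc (u : V2) (q : Fin 12 → ZMod 2) :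
    ∑ j, enc ρ q j * u j = ∑ i, q i * ∑ j, u j * red (ρ i j) := by
  simp only [enc, Finset.sum_mul, Finset.mul_sum]
  rw [Finset.sum_comm]
  exact Finset.sum_congr rfl fun i _ => Finset.sum_congr rfl fun j _ => by ring

lemma Good.inj (h : Good ρ) : Function.Injective (enc ρ) := by
  intro p q hpq
  obtain ⟨r, hr⟩ := Finset.card_eq_one.mp h.cnt0
  have e2 : ∀ x : ZMod 2, x + x = 0 := by decide
  have h1 : p + q ∈ Finset.univ.filter fun p => wt (enc ρ p) = 0 := by
    rw [Finset.mem_filter, enc_add, hpq]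
    refine ⟨Finset.mem_univ _, ?_⟩
    rw [show enc ρ q + enc ρ q = 0 from funext fun j => e2 _, wt_zero]
  have h0 : (0 : Fin 12 → ZMod 2) ∈ Finset.univ.filter fun p => wt (enc ρ p) = 0 := by
    rw [Finset.mem_filter, enc_zero]
    exact ⟨Finset.mem_univ _, wt_zero⟩
  rw [hr, Finset.mem_singleton] at h1 h0
  have h3 : p + q = 0 := h1.trans h0.symm
  have e3 : ∀ x y : ZMod 2, x + y = 0 → x = y := by decide
  exact funext fun i => e3 _ _ (congrFun h3 i)

lemma Good.exists_one (h : Good ρ) : ∃ p, enc ρ p = 1 := by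
  obtain ⟨r, hr⟩ := Finset.card_eq_one.mp h.cnt24
  have : r ∈ Finset.univ.filter fun p => wt (enc ρ p) = 24 := by rw [hr]; simp
  exact ⟨r, eq_one_of_wt (Finset.mem_filter.mp this).2⟩

lemma Good.sum_wt (h : Good ρ) (f : ℕ → K) :
    ∑ p, f (wt (enc ρ p)) = f 0 + 759 * f 8 + 2576 * f 12 + 759 * f 16 + f 24 := by
  have h1 : ∀ p, f (wt (enc ρ p)) = (if wt (enc ρ p) = 0 then f 0 else 0) +
      (if wt (enc ρ p) = 8 then f 8 else 0) + (if wt (enc ρ p) = 12 then f 12 else 0) +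
      (if wt (enc ρ p) = 16 then f 16 else 0) + (if wt (enc ρ p) = 24 then f 24 else 0) := by
    intro p
    rcases h.wts p with e | e | e | e | e <;> rw [e] <;> simp
  rw [Finset.sum_congr rfl fun p _ => h1 p]
  simp only [Finset.sum_add_distrib, ← Finset.sum_filter, Finset.sum_const]
  rw [h.cnt0, h.cnt8, h.cnt12, h.cnt16, h.cnt24]
  simp only [nsmul_eq_mul]
  push_cast
  ring

/-- The binary code is self-dual: it is self-orthogonal, and Poisson summation shows that its dual
has `2 ^ 12` elements. -/
lemma Good.dual_eq (h : Good ρ) : dual ρ = Finset.univ.image (enc ρ) := by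
  symm
  apply Finset.eq_of_subset_of_card_le
  · intro u hu
    obtain ⟨p, -, rfl⟩ := Finset.mem_image.mp hu
    rw [dual, Finset.mem_filter]
    refine ⟨Finset.mem_univ _, funext fun i => ?_⟩
    rw [sum_mul_enc (fun j => red (ρ i j))]
    refine Finset.sum_eq_zero fun k _ => ?_
    rw [h.orth, mul_zero]
  · rw [Finset.card_image_of_injective _ h.inj]
    have h1 : ∑ u : V2, ∑ q, sgn ℤ (∑ j, enc ρ q j * u j) = 2 ^ 12 * (dual ρ).card := by
      have h0 : ∀ u : V2, ∑ q, sgn ℤ (∑ j, enc ρ q j * u j) =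
          if u ∈ dual ρ then 2 ^ 12 else 0 := by
        intro u
        simp_rw [sum_mul_enc]
        rw [char_sum (K := ℤ) fun i => ∑ j, u j * red (ρ i j), Fintype.card_fin]
        simp only [dual, Finset.mem_filter, Finset.mem_univ, true_and]
      rw [Finset.sum_congr rfl fun u _ => h0 u, ← Finset.sum_filter, Finset.filter_mem_eq_inter,
        Finset.univ_inter, Finset.sum_const, nsmul_eq_mul, mul_comm]
    have h2 : ∑ u : V2, ∑ q, sgn ℤ (∑ j, enc ρ q j * u j) = 2 ^ 24 := by
      rw [Finset.sum_comm]
      have : ∀ q, ∑ u : V2, sgn ℤ (∑ j, enc ρ q j * u j) = if q = 0 then 2 ^ 24 else 0 := by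
        intro q
        simp_rw [mul_comm (enc ρ q _)]
        rw [char_sum, Fintype.card_fin]
        have : enc ρ q = 0 ↔ q = 0 :=
          ⟨fun hq => h.inj (hq.trans enc_zero.symm), fun hq => by rw [hq, enc_zero]⟩
        simp only [this]
      simp_rw [this]
      simp
    have h3 : ((dual ρ).card : ℤ) = 2 ^ 12 := by
      refine mul_left_cancel₀ (a := (2 : ℤ) ^ 12) (by norm_num) ?_
      rw [← pow_add]
      exact h1.symm.trans h2
    have h4 : (dual ρ).card = 2 ^ 12 := by exact_mod_cast h3
    rw [h4, Finset.card_univ, Fintype.card_fun, ZMod.card, Fintype.card_fin]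

/-- Every element of `(ℤ/4ℤ)^12` is uniquely `p + 2 q` with `0,1`-vectors `p`, `q`. -/
lemma sum_split {M : Type*} [AddCommMonoid M] (f : (Fin 12 → ZMod 4) → M) :
    ∑ m, f m = ∑ p : Fin 12 → ZMod 2, ∑ q : Fin 12 → ZMod 2,
      f fun i => lf (p i) + 2 * lf (q i) := by
  let e₀ : ZMod 2 × ZMod 2 → ZMod 4 := fun x => lf x.1 + 2 * lf x.2
  have he : Function.Bijective e₀ := by
    constructor
    · intro x y; revert x y; decide
    · intro x; revert x; decide
  rw [← Fintype.sum_prod_type' (f := fun p q : Fin 12 → ZMod 2 =>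
    f fun i => lf (p i) + 2 * lf (q i))]
  symm
  refine Fintype.sum_equiv ((Equiv.arrowProdEquivProdArrow (Fin 12) (fun _ => ZMod 2)
    (fun _ => ZMod 2)).symm.trans (Equiv.arrowCongr (Equiv.refl _) (Equiv.ofBijective e₀ he)))
    _ _ ?_
  intro x
  rfl

lemma E_split (p q : Fin 12 → ZMod 2) (j : Fin 24) :
    E ρ (fun i => lf (p i) + 2 * lf (q i)) j = ew ρ p j + 2 * ew ρ q j := by
  simp only [ew, E, Finset.mul_sum, ← Finset.sum_add_distrib]
  exact Finset.sum_congr rfl fun i _ => by ring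

/-- Poisson summation over the codewords with a given reduction modulo 2. -/
lemma Good.poisson (h : Good ρ) (x₀ x₁ z : K) :
    2 ^ 24 * ∑ m, ∏ j, phi x₀ x₁ z (E ρ m j) =
      2 ^ 12 * ∑ p, ∑ q, Psi (2 * x₀) (z - x₁) (z + x₁) (ew ρ p) (enc ρ q) := by
  set a := 2 * x₀
  set b := z - x₁
  set d := z + x₁
  have h1 : ∀ c : V4, 2 ^ 24 * ∏ j, phi x₀ x₁ z (c j) = ∑ u : V2, Psi a b d c u := by
    intro c
    have h2 := Finset.prod_univ_sum (fun _ : Fin 24 => (Finset.univ : Finset (ZMod 2)))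
      (fun j u => psi a b d (c j) u)
    rw [Fintype.piFinset_univ] at h2
    unfold Psi
    rw [← h2, Finset.prod_congr rfl fun j _ => (two_phi x₀ x₁ z (c j)).symm,
      Finset.prod_mul_distrib]
    simp
  have h2 : ∀ p q u, Psi a b d (fun j => ew ρ p j + 2 * ew ρ q j) u =
      sgn K (∑ j, enc ρ q j * u j) * Psi a b d (ew ρ p) u := by
    intro p q u
    unfold Psi
    rw [sgn_sum, ← Finset.prod_mul_distrib]
    refine Finset.prod_congr rfl fun j _ => ?_
    rw [psi_shift, ← redV_ew]
    rfl
  rw [sum_split, Finset.mul_sum, Finset.mul_sum]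
  refine Finset.sum_congr rfl fun p _ => ?_
  simp_rw [E_split]
  rw [Finset.mul_sum, Finset.sum_congr rfl fun q _ => h1 fun j => ew ρ p j + 2 * ew ρ q j,
    Finset.sum_comm]
  simp_rw [h2, ← Finset.sum_mul, sum_mul_enc]
  have h3 : ∀ u : V2, (∑ q : Fin 12 → ZMod 2, sgn K (∑ i, q i * ∑ j, u j * red (ρ i j))) *
      Psi a b d (ew ρ p) u = if u ∈ dual ρ then 2 ^ 12 * Psi a b d (ew ρ p) u else 0 := by
    intro u
    rw [char_sum (K := K) fun i => ∑ j, u j * red (ρ i j), Fintype.card_fin, ite_mul, zero_mul]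
    simp only [dual, Finset.mem_filter, Finset.mem_univ, true_and]
  rw [Finset.sum_congr rfl fun u _ => h3 u, ← Finset.sum_filter, Finset.filter_mem_eq_inter,
    Finset.univ_inter, h.dual_eq, Finset.sum_image fun x _ y _ hxy => h.inj hxy, Finset.mul_sum]

lemma Psi_cast (c : V4) (u : V2) : Psi (1 : K) 1 1 c u = ((Psi (1 : ℤ) 1 1 c u : ℤ) : K) := by
  unfold Psi
  rw [Int.cast_prod]
  refine Finset.prod_congr rfl fun j _ => ?_
  unfold psi
  split_ifs <;> simp

/-- The contribution of a codeword whose reduction has weight `w`. -/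
def tau (a b d : K) (w : ℕ) : K :=
  if w = 0 then d ^ 24 + 759 * b ^ 8 * d ^ 16 + 2576 * b ^ 12 * d ^ 12 + 759 * b ^ 16 * d ^ 8 +
    b ^ 24
  else if w = 8 then a ^ 8 * d ^ 16 + a ^ 8 * b ^ 16 - 2 * a ^ 8 * b ^ 8 * d ^ 8
  else if w = 12 then a ^ 12 * d ^ 12 - a ^ 12 * b ^ 12
  else if w = 16 then a ^ 16 * d ^ 8 + a ^ 16 * b ^ 8
  else a ^ 24

/-- Nonzero disjoint Golay codewords are complementary or both octads. -/
lemma Good.disj_cases (h : Good ρ) {p q : Fin 12 → ZMod 2} (hp : wt (enc ρ p) ≠ 0)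
    (hd : Disj (enc ρ p) (enc ρ q)) :
    q = 0 ∨ (wt (enc ρ p) + wt (enc ρ q) = 24 ∧ enc ρ q = 1 + enc ρ p) ∨
      (wt (enc ρ p) = 8 ∧ wt (enc ρ q) = 8) := by
  have h1 := wt_add hd
  rw [← enc_add] at h1
  by_cases hq : wt (enc ρ q) = 0
  · exact Or.inl (h.inj ((eq_zero_of_wt hq).trans enc_zero.symm))
  right
  by_cases h24 : wt (enc ρ p) + wt (enc ρ q) = 24
  · refine Or.inl ⟨h24, ?_⟩
    have h2 := eq_one_of_wt (h1.trans h24)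
    rw [enc_add] at h2
    rw [← h2]
    funext j
    have : ∀ x y : ZMod 2, y = x + y + x := by decide
    exact this _ _
  · have := h.wts p
    have := h.wts q
    have := h.wts (p + q)
    omega

lemma Good.inner_sum (h : Good ρ) (a b d : K) (p : Fin 12 → ZMod 2) :
    ∑ q, Psi a b d (ew ρ p) (enc ρ q) = tau a b d (wt (enc ρ p)) := by
  obtain ⟨r, hr⟩ := h.exists_one
  have hc : enc ρ (r + p) = 1 + enc ρ p := by rw [enc_add, hr]
  have hdc : Disj (enc ρ p) (enc ρ (r + p)) := by
    rw [hc]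
    intro j
    have : ∀ x : ZMod 2, x = 0 ∨ 1 + x = 0 := by decide
    exact this _
  have hd0 : Disj (enc ρ p) (enc ρ 0) := by
    rw [enc_zero]; exact fun j => Or.inr rfl
  have hP : ∀ q, Disj (enc ρ p) (enc ρ q) → Psi a b d (ew ρ p) (enc ρ q) =
      Psi 1 1 1 (ew ρ p) (enc ρ q) * (a ^ wt (enc ρ p) * b ^ wt (enc ρ q) *
        d ^ (24 - wt (enc ρ p) - wt (enc ρ q))) := by
    intro q hq
    rw [← redV_ew p] at hq ⊢
    exact Psi_of_disj a b d hq
  have hN : ∀ a b d : K, ∀ q, ¬ Disj (enc ρ p) (enc ρ q) → Psi a b d (ew ρ p) (enc ρ q) = 0 := by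
    intro a b d q hq
    rw [← redV_ew p] at hq
    exact Psi_of_not_disj a b d hq
  have hPc : Psi (1 : K) 1 1 (ew ρ p) (enc ρ (r + p)) =
      (-1) ^ (Finset.univ.filter fun j => ew ρ p j = 2).card := by
    rw [hc, ← redV_ew, Psi_compl]
  have hwc : wt (enc ρ p) + wt (enc ρ (r + p)) = 24 := by
    rw [← wt_add hdc, hc]
    have : enc ρ p + (1 + enc ρ p) = 1 := by
      funext j
      have : ∀ x : ZMod 2, x + (1 + x) = 1 := by decide
      exact this _
    rw [this]
    simp [wt]
  -- A dual word complementary to the support is `r + p`.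
  have hcomp : ∀ q, enc ρ q = 1 + enc ρ p → q = r + p := fun q hq => h.inj (hq.trans hc.symm)
  have hone : ∀ q, q = 0 → Psi a b d (ew ρ p) (enc ρ q) =
      a ^ wt (enc ρ p) * d ^ (24 - wt (enc ρ p)) := by
    rintro q rfl
    rw [hP 0 hd0, enc_zero, Psi_zero_right, wt_zero]
    simp
  -- The common shape for weights 12 and 16: only `q = 0` and `q = r + p` contribute.
  have two_terms : wt (enc ρ p) ≠ 0 → wt (enc ρ p) ≠ 8 → wt (enc ρ p) ≠ 24 →
      ∑ q, Psi a b d (ew ρ p) (enc ρ q) = a ^ wt (enc ρ p) * d ^ (24 - wt (enc ρ p)) +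
        (-1) ^ (Finset.univ.filter fun j => ew ρ p j = 2).card *
          (a ^ wt (enc ρ p) * b ^ (24 - wt (enc ρ p))) := by
    intro n0 n8 n24
    have hne : (0 : Fin 12 → ZMod 2) ≠ r + p := by
      intro e
      rw [← e, enc_zero, wt_zero] at hwc
      omega
    rw [Fintype.sum_eq_add 0 (r + p) hne, hone 0 rfl, hP _ hdc, hPc]
    · have e1 : wt (enc ρ (r + p)) = 24 - wt (enc ρ p) := by omega
      rw [e1]
      simp
    · rintro q ⟨q0, qc⟩
      by_contra hq
      have hd : Disj (enc ρ p) (enc ρ q) := by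
        by_contra hd; exact hq (hN a b d q hd)
      rcases h.disj_cases n0 hd with e | ⟨-, e⟩ | ⟨e, -⟩
      · exact q0 e
      · exact qc (hcomp q e)
      · exact n8 e
  rcases h.wts p with w | w | w | w | w
  · have p0 : p = 0 := h.inj ((eq_zero_of_wt w).trans enc_zero.symm)
    have e0 : ew ρ p = 0 := by
      subst p0
      funext j
      simp [ew, E, lf]
    have hp0 : enc ρ p = 0 := eq_zero_of_wt w
    have hPs : ∀ q, Psi a b d (ew ρ p) (enc ρ q) =
        (fun n => b ^ n * d ^ (24 - n)) (wt (enc ρ q)) := by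
      intro q
      have hd : Disj (enc ρ p) (enc ρ q) := by rw [hp0]; exact fun j => Or.inl rfl
      have h1 : Psi (1 : K) 1 1 (ew ρ p) (enc ρ q) = 1 := by
        rw [e0]
        refine Finset.prod_eq_one fun j _ => ?_
        simp [psi]
      rw [hP q hd, h1, w]
      simp
    refine (Finset.sum_congr rfl fun q _ => hPs q).trans
      ((h.sum_wt fun n => b ^ n * d ^ (24 - n)).trans ?_)
    rw [w, tau, if_pos rfl]
    norm_num
    ring
  · -- The character `Psi 1 1 1` is nontrivial on the words disjoint from the octad, so its sum
    -- vanishes; the corrections come from `q = 0` and `q = r + p`.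
    obtain ⟨p', hd', hp'⟩ := h.oct p w
    have hneg : Psi (1 : K) 1 1 (ew ρ p) (enc ρ p') = -1 := by
      rw [Psi_cast, hp']; simp
    have hsum : ∑ q, Psi (1 : K) 1 1 (ew ρ p) (enc ρ q) = 0 := by
      have e2 : ∀ x : ZMod 2, x + x = 0 := by decide
      refine Finset.sum_involution (fun q _ => q + p') ?_ ?_ ?_ ?_
      · intro q _
        rw [← redV_ew p] at hd'
        rw [enc_add, Psi_add_right hd', hneg]
        ring
      · intro q _ _ e
        have hp0 : p' = 0 := by simpa using e
        rw [hp0, enc_zero, Psi_zero_right] at hp'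
        omega
      · intro q _; exact Finset.mem_univ _
      · intro q _
        funext i
        simp [add_assoc, e2]
    have hcE : Psi (1 : K) 1 1 (ew ρ p) (enc ρ (r + p)) = 1 := by
      rw [hPc, (h.par8 p w).neg_one_pow]
    have hne : (0 : Fin 12 → ZMod 2) ≠ r + p := by
      intro e
      rw [← e, enc_zero, wt_zero] at hwc
      omega
    have hterm : ∀ q, Psi a b d (ew ρ p) (enc ρ q) =
        Psi 1 1 1 (ew ρ p) (enc ρ q) * (a ^ 8 * b ^ 8 * d ^ 8) +
          (if q = 0 then a ^ 8 * d ^ 16 - a ^ 8 * b ^ 8 * d ^ 8 else 0) +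
          (if q = r + p then a ^ 8 * b ^ 16 - a ^ 8 * b ^ 8 * d ^ 8 else 0) := by
      intro q
      by_cases q0 : q = 0
      · rw [hone q q0]
        subst q0
        rw [if_pos rfl, if_neg hne, enc_zero, Psi_zero_right, w]
        ring
      by_cases qc : q = r + p
      · subst qc
        have e1 : wt (enc ρ (r + p)) = 16 := by omega
        rw [hP _ hdc, if_neg q0, if_pos rfl, hcE, w, e1]
        ring
      rw [if_neg q0, if_neg qc]
      by_cases hd : Disj (enc ρ p) (enc ρ q)
      · rcases h.disj_cases (by omega) hd with e | ⟨-, e⟩ | ⟨-, e⟩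
        · exact absurd e q0
        · exact absurd (hcomp q e) qc
        · rw [hP _ hd, w, e]
          ring
      · rw [hN a b d q hd, hN 1 1 1 q hd]
        ring
    rw [Finset.sum_congr rfl fun q _ => hterm q, Finset.sum_add_distrib, Finset.sum_add_distrib,
      ← Finset.sum_mul, hsum, Finset.sum_ite_eq', Finset.sum_ite_eq', w]
    simp only [Finset.mem_univ, if_true, tau]
    norm_num
    ring
  · rw [two_terms (by omega) (by omega) (by omega), (h.par12 p w).neg_one_pow, w]
    simp only [tau]
    norm_num
    ring
  · rw [two_terms (by omega) (by omega) (by omega), (h.par16 p w).neg_one_pow, w]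
    simp only [tau]
    norm_num
  · rw [Fintype.sum_eq_single 0, hone 0 rfl, w]
    · simp [tau]
    · intro q q0
      apply hN
      intro hd
      rcases h.disj_cases (by omega) hd with e | ⟨e, -⟩ | ⟨e, -⟩
      · exact q0 e
      · exact q0 (h.inj ((eq_zero_of_wt (by omega)).trans enc_zero.symm))
      · omega

theorem Good.swe_formula (h : Good ρ) (x₀ x₁ z : K) :
    2 ^ 24 * ∑ m, ∏ j, phi x₀ x₁ z (E ρ m j) =
      2 ^ 12 * (tau (2 * x₀) (z - x₁) (z + x₁) 0 + 759 * tau (2 * x₀) (z - x₁) (z + x₁) 8 +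
        2576 * tau (2 * x₀) (z - x₁) (z + x₁) 12 + 759 * tau (2 * x₀) (z - x₁) (z + x₁) 16 +
        tau (2 * x₀) (z - x₁) (z + x₁) 24) := by
  rw [h.poisson, Finset.sum_congr rfl fun p _ => h.inner_sum _ _ _ p, h.sum_wt]

end Code

/-! ### Bitmask arithmetic and the finite verification

A word over `ℤ/4ℤ` is stored as a pair `(hi, lo)` of bitmasks, its `k`-th coordinate being
`lo_k + 2 hi_k`. The functions below are spelled with the primitive operations on `ℕ`, which the
kernel evaluates natively. -/

section Bits

/-- The `k`-th coordinate of the word stored as `w`. -/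
def cf (w : ℕ × ℕ) (k : ℕ) : ZMod 4 :=
  (if w.2.testBit k then 1 else 0) + (if w.1.testBit k then 2 else 0)

/-- The word of length 24 stored as `w`. -/
def dec4 (w : ℕ × ℕ) : V4 := fun j => cf w j

/-- Addition of words over `ℤ/4ℤ`: the carry from the low bits is their conjunction. -/
def padd (a b : ℕ × ℕ) : ℕ × ℕ :=
  (Nat.xor (Nat.xor a.1 b.1) (Nat.land a.2 b.2), Nat.xor a.2 b.2)

/-- All combinations of the given rows with coefficients `0` and `1`. -/
def spanL : List (ℕ × ℕ) → List (ℕ × ℕ)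
  | [] => [(0, 0)]
  | r :: rs => spanL rs ++ (spanL rs).map (padd r)

/-- Population count of the six lowest bits of `x`. The constant is a table of the 64
counts, with four bits per entry. -/
def tab (x : ℕ) : ℕ :=
  Nat.mod (Nat.shiftRight
    45832594422234749298105850410103375650784739062395034443511311641156132086032
    (Nat.mul 4 (Nat.mod x 64))) 16

/-- Population count of the 24 lowest bits of `n`. -/
def fpop (n : ℕ) : ℕ :=
  Nat.add (Nat.add (tab n) (tab (Nat.div n 64)))
    (Nat.add (tab (Nat.div n 4096)) (tab (Nat.div n 262144)))

/-- The words whose reduction has weight 8. -/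
def octs (L : List (ℕ × ℕ)) : List (ℕ × ℕ) := L.filter fun w => Nat.beq (fpop w.2) 8

/-- The parity of the number of coordinates equal to 2. -/
def par (w : ℕ × ℕ) : ℕ := Nat.mod (fpop (Nat.xor w.1 (Nat.land w.1 w.2))) 2

/-- The weights that occur, and the parity condition on the number of coordinates equal to 2. -/
def check1 (L : List (ℕ × ℕ)) : Bool :=
  L.all fun w =>
    (Nat.beq (fpop w.2) 12 && Nat.beq (par w) 1) ||
      (((Nat.beq (fpop w.2) 8 || Nat.beq (fpop w.2) 16) && Nat.beq (par w) 0) ||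
        (Nat.beq (fpop w.2) 0 || Nat.beq (fpop w.2) 24))

/-- Each octad has a disjoint octad meeting its positions of 2 in an odd number of points. -/
def check2 (L : List (ℕ × ℕ)) : Bool :=
  (octs L).all fun w => (octs L).any fun w' =>
    Nat.beq (Nat.land w.2 w'.2) 0 && Nat.beq (Nat.mod (fpop (Nat.land w.1 w'.2)) 2) 1

/-- The number of words whose reduction has weight `k`. -/
def wcount (L : List (ℕ × ℕ)) (k : ℕ) : ℕ := L.countP fun w => Nat.beq (fpop w.2) k

/-- The weight distribution of the Golay code. -/
def check3 (L : List (ℕ × ℕ)) : Bool :=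
  Nat.beq (wcount L 0) 1 && (Nat.beq (wcount L 8) 759 && (Nat.beq (wcount L 12) 2576 &&
    (Nat.beq (wcount L 16) 759 && Nat.beq (wcount L 24) 1)))

/-- Pairwise orthogonality modulo 2. -/
def check4 (A : Fin 12 → ℕ × ℕ) : Bool :=
  (List.finRange 12).all fun i => (List.finRange 12).all fun k =>
    Nat.beq (Nat.mod (fpop (Nat.land (A i).2 (A k).2)) 2) 0

lemma cf_padd (a b : ℕ × ℕ) (k : ℕ) : cf (padd a b) k = cf a k + cf b k := by
  have h1 : ∀ x y : ℕ, Nat.testBit (Nat.xor x y) k = (x.testBit k ^^ y.testBit k) :=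
    fun x y => Nat.testBit_xor x y k
  have h2 : ∀ x y : ℕ, Nat.testBit (Nat.land x y) k = (x.testBit k && y.testBit k) :=
    fun x y => Nat.testBit_and x y k
  simp only [cf, padd, h1, h2]
  generalize a.1.testBit k = p
  generalize a.2.testBit k = q
  generalize b.1.testBit k = r
  generalize b.2.testBit k = s
  revert p q r s
  decide

lemma dec4_padd (a b : ℕ × ℕ) : dec4 (padd a b) = dec4 a + dec4 b :=
  funext fun j => cf_padd a b j

lemma dec4_zero : dec4 (0, 0) = 0 := by
  funext j; simp [dec4, cf]

lemma sum_spanL {M : Type*} [AddCommMonoid M] {n : ℕ} (A : Fin n → ℕ × ℕ) (f : V4 → M) :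
    ∑ p : Fin n → ZMod 2, f (fun j => ∑ i, lf (p i) * dec4 (A i) j) =
      ((spanL (List.ofFn A)).map fun w => f (dec4 w)).sum := by
  induction n generalizing f with
  | zero =>
    simp [spanL, dec4_zero]
    rfl
  | succ n ih =>
    have h1 := Fintype.sum_equiv (Fin.consEquiv fun _ : Fin (n + 1) => ZMod 2)
      (fun x => f (fun j => ∑ i, lf ((Fin.cons x.1 x.2 : Fin (n + 1) → ZMod 2) i) * dec4 (A i) j))
      (fun p => f (fun j => ∑ i, lf (p i) * dec4 (A i) j)) (fun x => rfl)
    rw [← h1, Fintype.sum_prod_type]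
    have h2 : ∀ g : ZMod 2 → M, ∑ x, g x = g 0 + g 1 := fun g => Fin.sum_univ_two g
    have l0 : lf 0 = 0 := by decide
    have l1 : lf 1 = 1 := by decide
    rw [h2, List.ofFn_succ, spanL, List.map_append, List.sum_append]
    simp only [Fin.sum_univ_succ, Fin.cons_zero, Fin.cons_succ, l0, l1, zero_mul, one_mul,
      zero_add]
    congr 1
    · exact ih (fun i => A i.succ) f
    · rw [List.map_map]
      refine (ih (fun i => A i.succ) fun v => f (dec4 (A 0) + v)).trans ?_
      congr 1
      refine List.map_congr_left fun w _ => ?_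
      simp only [Function.comp, dec4_padd]

lemma tab_eq (x : ℕ) : tab x = ∑ j : Fin 6, if x.testBit j then 1 else 0 := by
  have h1 : ∀ y < 64, tab y = ∑ j : Fin 6, if y.testBit j then 1 else 0 := by decide +kernel
  have h2 : tab x = tab (x % 64) := by
    unfold tab
    rw [show Nat.mod (x % 64) 64 = Nat.mod x 64 from Nat.mod_mod x 64]
  rw [h2, h1 _ (Nat.mod_lt _ (by norm_num))]
  refine Finset.sum_congr rfl fun j _ => ?_
  have : (x % 64).testBit j = x.testBit j := by
    have := Nat.testBit_mod_two_pow x 6 j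
    norm_num at this
    rw [this]
  rw [this]

lemma fpop_eq (n : ℕ) :
    fpop n = (Finset.univ.filter fun j : Fin 24 => n.testBit j = true).card := by
  have hd : ∀ k j, (Nat.div n (2 ^ k)).testBit j = n.testBit (j + k) :=
    fun k j => Nat.testBit_div_two_pow n j
  have h6 := hd 6
  have h12 := hd 12
  have h18 := hd 18
  norm_num at h6 h12 h18
  rw [Finset.card_filter]
  change (tab n + tab (Nat.div n 64)) + (tab (Nat.div n 4096) + tab (Nat.div n 262144)) = _
  simp only [tab_eq, h6, h12, h18, Fin.sum_univ_succ, Fin.sum_univ_zero, Fin.val_zero,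
    Fin.val_succ]
  norm_num
  ring

lemma wt_dec4 (w : ℕ × ℕ) : wt (redV (dec4 w)) = fpop w.2 := by
  rw [fpop_eq, wt]
  have key : ∀ p q : Bool, red ((if q then 1 else 0) + (if p then 2 else 0)) ≠ 0 ↔ q = true := by
    decide
  exact congrArg Finset.card (Finset.filter_congr fun j _ => key (w.1.testBit j) (w.2.testBit j))

lemma twos_dec4 (w : ℕ × ℕ) :
    (Finset.univ.filter fun j => dec4 w j = 2).card = fpop (Nat.xor w.1 (Nat.land w.1 w.2)) := by
  rw [fpop_eq]
  have key : ∀ p q : Bool, ((if q then 1 else 0) + (if p then 2 else 0) : ZMod 4) = 2 ↔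
      (p ^^ (p && q)) = true := by
    decide
  refine congrArg Finset.card (Finset.filter_congr fun j _ => ?_)
  have h : (Nat.xor w.1 (Nat.land w.1 w.2)).testBit j =
      (w.1.testBit j ^^ (w.1.testBit j && w.2.testBit j)) :=
    (Nat.testBit_xor w.1 (w.1 &&& w.2) j).trans (by rw [Nat.testBit_and])
  rw [h]
  exact key (w.1.testBit j) (w.2.testBit j)

lemma disj_bits {w w' : ℕ × ℕ} (h : Nat.land w.2 w'.2 = 0) (k : ℕ) :
    (w.2.testBit k && w'.2.testBit k) = false := by
  rw [← Nat.testBit_and]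
  change (Nat.land w.2 w'.2).testBit k = false
  rw [h, Nat.zero_testBit]

lemma disj_dec4 {w w' : ℕ × ℕ} (h : Nat.land w.2 w'.2 = 0) :
    Disj (redV (dec4 w)) (redV (dec4 w')) := by
  intro j
  have hb := disj_bits h j
  revert hb
  simp only [redV, dec4, cf]
  generalize w.1.testBit j = p
  generalize w.2.testBit j = q
  generalize w'.1.testBit j = r
  generalize w'.2.testBit j = s
  revert p q r s
  decide

lemma Psi_dec4 {w w' : ℕ × ℕ} (h : Nat.land w.2 w'.2 = 0) :
    Psi (1 : ℤ) 1 1 (dec4 w) (redV (dec4 w')) = (-1) ^ fpop (Nat.land w.1 w'.2) := by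
  rw [fpop_eq, ← prod_boole]
  refine Finset.prod_congr rfl fun j _ => ?_
  have hb := disj_bits h j
  have h2 : (Nat.land w.1 w'.2).testBit j = (w.1.testBit j && w'.2.testBit j) :=
    Nat.testBit_and w.1 w'.2 j
  have key : ∀ p q r s : Bool, (q && s) = false →
      psi (1 : ℤ) 1 1 ((if q then 1 else 0) + (if p then 2 else 0))
        (red ((if s then 1 else 0) + (if r then 2 else 0))) =
      if (p && s) = true then -1 else 1 := by
    unfold psi
    decide
  rw [h2]
  exact key _ _ _ _ hb

lemma count_ew (A : Fin 12 → ℕ × ℕ) (P : V4 → Prop) [DecidablePred P] :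
    (Finset.univ.filter fun p => P (ew (fun i => dec4 (A i)) p)).card =
      (spanL (List.ofFn A)).countP fun w => decide (P (dec4 w)) := by
  rw [Finset.card_filter]
  refine (sum_spanL A fun v => if P v then 1 else 0).trans ?_
  induction spanL (List.ofFn A) with
  | nil => simp
  | cons w L ih => rw [List.map_cons, List.sum_cons, ih, List.countP_cons, add_comm]; simp

lemma forall_ew (A : Fin 12 → ℕ × ℕ) (P : V4 → Prop)
    (h : ∀ w ∈ spanL (List.ofFn A), P (dec4 w)) (p : Fin 12 → ZMod 2) :
    P (ew (fun i => dec4 (A i)) p) := by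
  by_contra hp
  have h1 := count_ew A fun v => ¬ P v
  have h2 : (spanL (List.ofFn A)).countP (fun w => decide (¬ P (dec4 w))) = 0 :=
    List.countP_eq_zero.mpr fun w hw => by simpa using h w hw
  rw [h2, Finset.card_eq_zero] at h1
  exact Finset.notMem_empty p (h1 ▸ Finset.mem_filter.mpr ⟨Finset.mem_univ p, hp⟩)

lemma exists_ew (A : Fin 12 → ℕ × ℕ) {w : ℕ × ℕ} (hw : w ∈ spanL (List.ofFn A)) :
    ∃ p, ew (fun i => dec4 (A i)) p = dec4 w := by
  have h1 := count_ew A fun v => v = dec4 w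
  have h2 : 0 < (spanL (List.ofFn A)).countP fun w' => decide (dec4 w' = dec4 w) :=
    List.countP_pos_iff.mpr ⟨w, hw, by simp⟩
  rw [← h1, Finset.card_pos] at h2
  obtain ⟨p, hp⟩ := h2
  exact ⟨p, (Finset.mem_filter.mp hp).2⟩

theorem good_of_check (A : Fin 12 → ℕ × ℕ) (h1 : check1 (spanL (List.ofFn A)) = true)
    (h2 : check2 (spanL (List.ofFn A)) = true) (h3 : check3 (spanL (List.ofFn A)) = true)
    (h4 : check4 A = true) : Good fun i => dec4 (A i) := by
  have cnt : ∀ k, (Finset.univ.filter fun p => wt (enc (fun i => dec4 (A i)) p) = k).card =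
      wcount (spanL (List.ofFn A)) k := by
    intro k
    have hf : ∀ p, wt (enc (fun i => dec4 (A i)) p) = k ↔
        wt (redV (ew (fun i => dec4 (A i)) p)) = k := fun p => by rw [redV_ew]
    rw [Finset.filter_congr fun p _ => hf p]
    refine (count_ew A fun v => wt (redV v) = k).trans ?_
    unfold wcount
    refine List.countP_congr fun w _ => ?_
    rw [wt_dec4]
    simp
  simp only [check3, Bool.and_eq_true, Nat.beq_eq] at h3
  obtain ⟨c0, c8, c12, c16, c24⟩ := h3
  simp only [check1, List.all_eq_true, Bool.and_eq_true, Bool.or_eq_true, Nat.beq_eq, par] at h1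
  have hmod : ∀ n, Nat.mod n 2 = n % 2 := fun _ => rfl
  simp only [hmod, ← wt_dec4, ← twos_dec4] at h1
  have key := forall_ew A (fun v => wt (redV v) = 12 ∧
    (Finset.univ.filter fun j => v j = 2).card % 2 = 1 ∨
    (wt (redV v) = 8 ∨ wt (redV v) = 16) ∧ (Finset.univ.filter fun j => v j = 2).card % 2 = 0 ∨
    wt (redV v) = 0 ∨ wt (redV v) = 24) h1
  simp only [redV_ew] at key
  refine ⟨?_, ?_, (cnt 0).trans c0, (cnt 8).trans c8, (cnt 12).trans c12, (cnt 16).trans c16,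
    (cnt 24).trans c24, ?_, ?_, ?_, ?_⟩
  · intro i k
    simp only [check4, List.all_eq_true, Nat.beq_eq, hmod] at h4
    have h5 := h4 i (List.mem_finRange i) k (List.mem_finRange k)
    have h6 : ∀ j : Fin 24, red (dec4 (A i) j) * red (dec4 (A k) j) =
        if (Nat.land (A i).2 (A k).2).testBit j = true then 1 else 0 := by
      intro j
      have : (Nat.land (A i).2 (A k).2).testBit j = ((A i).2.testBit j && (A k).2.testBit j) :=
        Nat.testBit_and _ _ j
      rw [this]
      simp only [dec4, cf]
      generalize (A i).1.testBit j = p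
      generalize (A i).2.testBit j = q
      generalize (A k).1.testBit j = r
      generalize (A k).2.testBit j = s
      revert p q r s
      decide
    rw [Finset.sum_congr rfl fun j _ => h6 j, Finset.sum_boole, ← fpop_eq,
      ZMod.natCast_eq_zero_iff]
    exact Nat.dvd_of_mod_eq_zero h5
  · intro p; have := key p; omega
  · intro p hp; rw [Nat.even_iff]; have := key p; omega
  · intro p hp; rw [Nat.odd_iff]; have := key p; omega
  · intro p hp; rw [Nat.even_iff]; have := key p; omega
  · intro p hp
    rw [← redV_ew] at hp ⊢
    refine forall_ew A (fun v => wt (redV v) = 8 → ∃ p', Disj (redV v)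
      (enc (fun i => dec4 (A i)) p') ∧ Psi (1 : ℤ) 1 1 v (enc (fun i => dec4 (A i)) p') = -1)
      ?_ p hp
    intro w hw hw8
    simp only [check2, octs, List.all_eq_true, List.any_eq_true, List.mem_filter, Nat.beq_eq,
      Bool.and_eq_true, hmod] at h2
    obtain ⟨w', ⟨hw', -⟩, hl, ho⟩ := h2 w ⟨hw, by rw [← wt_dec4]; exact hw8⟩
    obtain ⟨p', hp'⟩ := exists_ew A hw'
    refine ⟨p', ?_, ?_⟩
    · rw [← redV_ew, hp']; exact disj_dec4 hl
    · rw [← redV_ew, hp', Psi_dec4 hl, (Nat.odd_iff.mpr ho).neg_one_pow]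

/-- The `i`-th row of the generator matrix: the coefficients stored as `(h, l)` shifted by `i`,
extended by the coordinate stored as `e`. -/
def row (h l : ℕ) (e : ℕ × ℕ) (i : Fin 12) : ℕ × ℕ :=
  (h * 2 ^ (i : ℕ) + e.1 * 2 ^ 23, l * 2 ^ (i : ℕ) + e.2 * 2 ^ 23)

end Bits

set_option maxRecDepth 100000 in
theorem good_a : Good fun i => dec4 (row 1777 2787 (1, 1) i) :=
  good_of_check _ (by decide +kernel) (by decide +kernel) (by decide +kernel) (by decide +kernel)

set_option maxRecDepth 100000 in
theorem good_b : Good fun i => dec4 (row 1155 3189 (0, 1) i) :=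
  good_of_check _ (by decide +kernel) (by decide +kernel) (by decide +kernel) (by decide +kernel)

/-! ### The generator polynomials -/

section Poly

local instance : Fact (1 < 4) := ⟨by norm_num⟩

/-- The polynomial of degree at most 11 whose coefficients are stored as `(h, l)`. -/
def gpoly (h l : ℕ) : Polynomial (ZMod 4) :=
  ∑ k ∈ Finset.range 12, Polynomial.C (cf (h, l) k) * Polynomial.X ^ k

lemma coeff_gpoly (h l n : ℕ) : (gpoly h l).coeff n = if n < 12 then cf (h, l) n else 0 := by
  simp [gpoly, Polynomial.finsetSum_coeff, Polynomial.coeff_C_mul, Polynomial.coeff_X_pow]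

lemma natDegree_gpoly_le (h l : ℕ) : (gpoly h l).natDegree ≤ 11 := by
  rw [Polynomial.natDegree_le_iff_coeff_eq_zero]
  intro n hn
  rw [coeff_gpoly, if_neg (by omega)]

lemma monic_gpoly {h l : ℕ} (h1 : cf (h, l) 11 = 1) : (gpoly h l).Monic :=
  Polynomial.monic_of_natDegree_le_of_coeff_eq_one 11 (natDegree_gpoly_le h l)
    (by rw [coeff_gpoly, if_pos (by norm_num), h1])

lemma natDegree_gpoly {h l : ℕ} (h1 : cf (h, l) 11 = 1) : (gpoly h l).natDegree = 11 := by
  refine le_antisymm (natDegree_gpoly_le h l) (Polynomial.le_natDegree_of_ne_zero ?_)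
  rw [coeff_gpoly, if_pos (by norm_num), h1]
  decide

lemma gpoly_a : gpoly 1777 2787 = -1 + Polynomial.X + 2 * Polynomial.X ^ 4 - Polynomial.X ^ 5
    - Polynomial.X ^ 6 - Polynomial.X ^ 7 - Polynomial.X ^ 9 + 2 * Polynomial.X ^ 10
    + Polynomial.X ^ 11 := by
  have h : ∀ k : Fin 12, cf (1777, 2787) k = ![-1, 1, 0, 0, 2, -1, -1, -1, 0, -1, 2, 1] k := by
    decide
  rw [gpoly, Finset.sum_range, Finset.sum_congr rfl fun k _ => by rw [h k]]
  have c2 : Polynomial.C (2 : ZMod 4) = 2 := rfl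
  simp [Fin.sum_univ_succ, c2]
  ring

lemma gpoly_b : gpoly 1155 3189 = -1 + 2 * Polynomial.X + Polynomial.X ^ 2 + Polynomial.X ^ 4
    + Polynomial.X ^ 5 + Polynomial.X ^ 6 + 2 * Polynomial.X ^ 7 - Polynomial.X ^ 10
    + Polynomial.X ^ 11 := by
  have h : ∀ k : Fin 12, cf (1155, 3189) k = ![-1, 2, 1, 0, 1, 1, 1, 2, 0, 0, -1, 1] k := by
    decide
  rw [gpoly, Finset.sum_range, Finset.sum_congr rfl fun k _ => by rw [h k]]
  have c2 : Polynomial.C (2 : ZMod 4) = 2 := rfl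
  simp [Fin.sum_univ_succ, c2]
  ring

/-- The factorization of `x ^ 23 - 1` over `ℤ/4ℤ`. -/
lemma factor : (Polynomial.X - 1) * gpoly 1777 2787 * gpoly 1155 3189 =
    (Polynomial.X ^ 23 - 1 : Polynomial (ZMod 4)) := by
  have h4 : (4 : Polynomial (ZMod 4)) = 0 := by
    have : (4 : ZMod 4) = 0 := by decide
    rw [show (4 : Polynomial (ZMod 4)) = Polynomial.C 4 from rfl, this, map_zero]
  rw [gpoly_a, gpoly_b]
  generalize (Polynomial.X : Polynomial (ZMod 4)) = x at *
  linear_combination (x - x^2 + x^4 - 2*x^5 + x^6 + x^7 - x^8 + x^10 - x^11 + x^13 - 2*x^15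
    + x^16 - x^17 + x^18 + x^20 - x^21) * h4

/-- Uniqueness of the Hensel lift of a factor of `x ^ 23 - 1`. Since `x ^ 23 - 1` is separable, the
cofactor `H` of `A` is coprime to `A`, hence to every `B` congruent to `A` modulo 2, because
`2` is nilpotent. -/
lemma lift_unique {A B H : Polynomial (ZMod 4)} (hA : A.Monic) (hB : B.Monic)
    (hd : A.natDegree = B.natDegree) (hAH : A * H = Polynomial.X ^ 23 - 1)
    (hBd : B ∣ Polynomial.X ^ 23 - 1) (hm : B.map red = A.map red) : B = A := by
  have h22 : (2 : Polynomial (ZMod 4)) * 2 = 0 := by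
    have : (2 : ZMod 4) * 2 = 0 := by decide
    rw [show (2 : Polynomial (ZMod 4)) = Polynomial.C 2 from rfl, ← map_mul, this, map_zero]
  have hsep : (A * H).Separable := by
    rw [hAH]
    have h23 : IsUnit ((23 : ℕ) : ZMod 4) := by
      refine IsUnit.of_mul_eq_one (3 : ZMod 4) ?_
      decide
    have := Polynomial.separable_X_pow_sub_C_unit (R := ZMod 4) (n := 23) 1 h23
    simpa using this
  obtain ⟨u, v, huv⟩ := hsep.isCoprime
  obtain ⟨e, he⟩ : ∃ e : Polynomial (ZMod 4), B = A + 2 * e := by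
    have key : ∀ x y : ZMod 4, red x = red y → ∃ t, x = y + 2 * t := by decide
    have h1 : ∀ n, ∃ t, B.coeff n = A.coeff n + 2 * t := fun n => key _ _ (by
      have := congrArg (fun p => Polynomial.coeff p n) hm
      simpa only [Polynomial.coeff_map] using this)
    choose t ht using h1
    refine ⟨∑ k ∈ Finset.range (B.natDegree + 1), Polynomial.C (t k) * Polynomial.X ^ k, ?_⟩
    ext n
    rw [Polynomial.coeff_add, show (2 : Polynomial (ZMod 4)) = Polynomial.C 2 from rfl,
      Polynomial.coeff_C_mul]
    have h2 : (∑ k ∈ Finset.range (B.natDegree + 1),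
        Polynomial.C (t k) * Polynomial.X ^ k).coeff n = if n < B.natDegree + 1 then t n else 0 := by
      simp [Polynomial.finsetSum_coeff, Polynomial.coeff_C_mul, Polynomial.coeff_X_pow]
    rw [h2]
    split_ifs with hn
    · exact ht n
    · rw [Polynomial.coeff_eq_zero_of_natDegree_lt (by omega),
        Polynomial.coeff_eq_zero_of_natDegree_lt (by omega)]
      simp
  have hcop : IsCoprime B H := by
    refine ⟨(1 + 2 * u * e) * u, (1 + 2 * u * e) * v, ?_⟩
    rw [he]
    linear_combination (1 + 2 * u * e) * huv + (u ^ 2 * e ^ 2 + u * e) * h22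
  have hdvd : B ∣ A := hcop.dvd_of_dvd_mul_right (hAH ▸ hBd)
  exact (Polynomial.eq_of_monic_of_dvd_of_natDegree_le hB hA hdvd hd.le).symm

/-- The Hensel lift of a quadratic residue factor is one of two explicit polynomials. -/
theorem generator_cases {g : Polynomial (ZMod 2)} (hg : IsQRFactor 2 g)
    {g2 : Polynomial (ZMod 4)} (hmon : g2.Monic) (hdeg : g2.natDegree = 11)
    (hdvd : g2 ∣ Polynomial.X ^ 23 - 1) (hmap : g2.map red = g) :
    g2 = gpoly 1777 2787 ∨ g2 = gpoly 1155 3189 := by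
  obtain ⟨gmon, gdeg, girr, gdvd⟩ := hg
  have ha : cf (1777, 2787) 11 = 1 := by decide
  have hb : cf (1155, 3189) 11 = 1 := by decide
  have same : ∀ {h l : ℕ}, cf (h, l) 11 = 1 → g ∣ (gpoly h l).map red →
      g2.map red = (gpoly h l).map red := fun h1 hd => by
    rw [hmap]
    refine (Polynomial.eq_of_monic_of_dvd_of_natDegree_le gmon ((monic_gpoly h1).map _) hd ?_).symm
    rw [(monic_gpoly h1).natDegree_map, natDegree_gpoly h1, gdeg]
  have hf := congrArg (Polynomial.map red) factor
  simp only [Polynomial.map_mul, Polynomial.map_sub, Polynomial.map_X, Polynomial.map_one,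
    Polynomial.map_pow] at hf
  rw [← hf] at gdvd
  rcases girr.prime.dvd_or_dvd gdvd with h | h
  · rcases girr.prime.dvd_or_dvd h with h | h
    · exfalso
      have h1 : (Polynomial.X - 1 : Polynomial (ZMod 2)) = Polynomial.X - Polynomial.C 1 := by simp
      have := Polynomial.natDegree_le_of_dvd h (h1 ▸ Polynomial.X_sub_C_ne_zero 1)
      rw [h1, Polynomial.natDegree_X_sub_C] at this
      omega
    · exact Or.inl (lift_unique (monic_gpoly ha) hmon ((natDegree_gpoly ha).trans hdeg.symm)
        (H := (Polynomial.X - 1) * gpoly 1155 3189) (by rw [← factor]; ring) hdvd (same ha h))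
  · exact Or.inr (lift_unique (monic_gpoly hb) hmon ((natDegree_gpoly hb).trans hdeg.symm)
      (H := (Polynomial.X - 1) * gpoly 1777 2787) (by rw [← factor]; ring) hdvd (same hb h))

/-! ### The code as the row space of a matrix -/

/-- The message polynomial with coefficients `m`. -/
def mpoly (m : Fin 12 → ZMod 4) : Polynomial (ZMod 4) :=
  ∑ i, Polynomial.C (m i) * Polynomial.X ^ (i : ℕ)

lemma coeff_mpoly (m : Fin 12 → ZMod 4) (i : Fin 12) : (mpoly m).coeff i = m i := by
  simp [mpoly, Polynomial.finsetSum_coeff, Polynomial.coeff_C_mul, Polynomial.coeff_X_pow,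
    Fin.val_inj]

lemma natDegree_mpoly_le (m : Fin 12 → ZMod 4) : (mpoly m).natDegree ≤ 11 := by
  refine Polynomial.natDegree_sum_le_of_forall_le _ _ fun i _ => ?_
  exact (Polynomial.natDegree_C_mul_X_pow_le _ _).trans (by omega)

lemma mpoly_coeff {r : Polynomial (ZMod 4)} (hr : r.natDegree < 12) :
    mpoly (fun i => r.coeff i) = r := by
  rw [mpoly, Fin.sum_univ_eq_sum_range fun i => Polynomial.C (r.coeff i) * Polynomial.X ^ i]
  exact (r.as_sum_range_C_mul_X_pow' hr).symm

/-- The rows are the shifts of the generator polynomial, extended by a parity check. -/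
structure IsShift (ρ : Fin 12 → V4) (h l : ℕ) : Prop where
  shift : ∀ (i : Fin 12) (j : Fin 23), ρ i (Fin.castSucc j) =
    if (i : ℕ) ≤ j then (if (j : ℕ) - i < 12 then cf (h, l) (j - i) else 0) else 0
  check : ∀ i : Fin 12, ρ i (Fin.last 23) = - ∑ j : Fin 23, ρ i (Fin.castSucc j)

variable {ρ : Fin 12 → V4} {h l : ℕ}

lemma E_castSucc (hs : IsShift ρ h l) (m : Fin 12 → ZMod 4) (j : Fin 23) :
    E ρ m (Fin.castSucc j) = (mpoly m * gpoly h l).coeff j := by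
  rw [mpoly, Finset.sum_mul, Polynomial.finsetSum_coeff]
  refine Finset.sum_congr rfl fun i _ => ?_
  rw [hs.shift, mul_assoc, Polynomial.coeff_C_mul, Polynomial.coeff_X_pow_mul', coeff_gpoly]

lemma E_last (hs : IsShift ρ h l) (m : Fin 12 → ZMod 4) :
    E ρ m (Fin.last 23) = - ∑ j : Fin 23, E ρ m (Fin.castSucc j) := by
  simp only [E, hs.check, mul_neg, Finset.sum_neg_distrib]
  rw [Finset.sum_comm]
  simp only [Finset.mul_sum]

variable (h l) in
lemma natDegree_mul_gpoly (m : Fin 12 → ZMod 4) :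
    (mpoly m * gpoly h l).natDegree < 23 := by
  have h1 := Polynomial.natDegree_mul_le (p := mpoly m) (q := gpoly h l)
  have h2 := natDegree_mpoly_le m
  have h3 := natDegree_gpoly_le h l
  omega

lemma E_injective (hs : IsShift ρ h l) (h1 : cf (h, l) 11 = 1) :
    Function.Injective (E ρ) := by
  intro m m' hmm
  have hp : mpoly m * gpoly h l = mpoly m' * gpoly h l := by
    ext n
    by_cases hn : n < 23
    · have := congrFun hmm (Fin.castSucc ⟨n, hn⟩)
      rwa [E_castSucc hs, E_castSucc hs] at this
    · rw [Polynomial.coeff_eq_zero_of_natDegree_lt, Polynomial.coeff_eq_zero_of_natDegree_lt]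
      · have := natDegree_mul_gpoly h l m'; omega
      · have := natDegree_mul_gpoly h l m; omega
  have h2 : mpoly m = mpoly m' := (monic_gpoly h1).isRegular.right hp
  funext i
  rw [← coeff_mpoly m, h2, coeff_mpoly]

lemma monic_X23 : (Polynomial.X ^ 23 - 1 : Polynomial (ZMod 4)).Monic :=
  Polynomial.monic_X_pow_sub_C (1 : ZMod 4) (by norm_num : 23 ≠ 0)

variable (h l) in
lemma mod_eq_self (m : Fin 12 → ZMod 4) :
    (mpoly m * gpoly h l) %ₘ (Polynomial.X ^ 23 - 1) = mpoly m * gpoly h l := by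
  rw [Polynomial.modByMonic_eq_self_iff monic_X23]
  refine Polynomial.degree_lt_degree ?_
  rw [show (Polynomial.X ^ 23 - 1 : Polynomial (ZMod 4)).natDegree = 23 from
    Polynomial.natDegree_X_pow_sub_C (n := 23) (r := (1 : ZMod 4))]
  exact natDegree_mul_gpoly h l m

/-- Summation over the lifted code is summation over the messages. Every multiple `f * g` agrees
modulo `x ^ 23 - 1 = g * H` with `(f mod H) * g`. -/
theorem sum_code {M : Type*} [AddCommMonoid M] (hs : IsShift ρ h l)
    (h1 : cf (h, l) 11 = 1) {H : Polynomial (ZMod 4)} (hH : H.Monic) (hHd : H.natDegree = 12)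
    (hf : gpoly h l * H = Polynomial.X ^ 23 - 1) {C : Submodule (ZMod 4) V4}
    (hC : ∀ c : V4, c ∈ C ↔
      ((∃ f : Polynomial (ZMod 4), ∀ j : Fin 23,
          c (Fin.castSucc j) = ((f * gpoly h l) %ₘ (Polynomial.X ^ 23 - 1)).coeff (j : ℕ)) ∧
        c (Fin.last 23) = - ∑ j : Fin 23, c (Fin.castSucc j))) (F : V4 → M) :
    (∑ c : V4, if c ∈ C then F c else 0) = ∑ m, F (E ρ m) := by
  have hmem : ∀ c, c ∈ C ↔ ∃ m, E ρ m = c := by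
    intro c
    rw [hC]
    constructor
    · rintro ⟨⟨f, hfc⟩, hlast⟩
      refine ⟨fun i => (f %ₘ H).coeff i, ?_⟩
      have hr : mpoly (fun i => (f %ₘ H).coeff i) = f %ₘ H := by
        refine mpoly_coeff ?_
        rw [← hHd]
        refine Polynomial.natDegree_modByMonic_lt f hH fun h => ?_
        rw [h, Polynomial.natDegree_one] at hHd
        omega
      have hmod := mod_eq_self h l fun i => (f %ₘ H).coeff i
      rw [hr] at hmod
      have hj : ∀ j : Fin 23, E ρ (fun i => (f %ₘ H).coeff i)
          (Fin.castSucc j) = c (Fin.castSucc j) := by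
        intro j
        rw [E_castSucc hs, hfc]
        have h2 : f * gpoly h l = (f %ₘ H) * gpoly h l + (Polynomial.X ^ 23 - 1) * (f /ₘ H) := by
          rw [← hf]
          nth_rewrite 1 [← Polynomial.modByMonic_add_div f H]
          ring
        rw [h2, Polynomial.add_modByMonic,
          (Polynomial.modByMonic_eq_zero_iff_dvd monic_X23).mpr (dvd_mul_right _ _), add_zero,
          hr, hmod]
      funext j
      refine Fin.lastCases ?_ (fun j => hj j) j
      rw [E_last hs, hlast, Finset.sum_congr rfl fun j _ => hj j]
    · rintro ⟨m, rfl⟩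
      refine ⟨⟨mpoly m, fun j => ?_⟩, E_last hs m⟩
      rw [mod_eq_self, E_castSucc hs]
  rw [← Finset.sum_filter]
  have himg : Finset.univ.filter (fun c => c ∈ C) =
      Finset.univ.image (E ρ) := by
    ext c
    rw [Finset.mem_filter, Finset.mem_image, hmem]
    simp
  rw [himg, Finset.sum_image fun _ _ _ _ hab => E_injective hs h1 hab]

lemma shift_a : IsShift (fun i => dec4 (row 1777 2787 (1, 1) i)) 1777 2787 :=
  ⟨by decide +kernel, by decide +kernel⟩

lemma shift_b : IsShift (fun i => dec4 (row 1155 3189 (0, 1) i)) 1155 3189 :=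
  ⟨by decide +kernel, by decide +kernel⟩

end Poly

/-! ### The symmetrized weight enumerator -/

/-- The monomial of a word is the product of the local weights `phi`. -/
lemma swe_term {K : Type*} [CommRing K] (x : Fin 3 → K) (c : V4) :
    (∏ i : Fin 2, x (Fin.castSucc i) ^
        (Finset.univ.filter fun j => c j ≠ 0 ∧ padicValNat 2 (c j).val = (i : ℕ)).card) *
      x (Fin.last 2) ^ (Finset.univ.filter fun j => c j = 0).card =
    ∏ j, phi (x 0) (x 1) (x 2) (c j) := by
  rw [Fin.prod_univ_two]
  simp only [← prod_boole]
  rw [← Finset.prod_mul_distrib, ← Finset.prod_mul_distrib]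
  refine Finset.prod_congr rfl fun j _ => ?_
  have v1 : padicValNat 2 1 = 0 := by simp
  have v3 : padicValNat 2 3 = 0 := padicValNat.eq_zero_of_not_dvd (by norm_num)
  have w1 : (1 : ZMod 4).val = 1 := rfl
  have w2 : (2 : ZMod 4).val = 2 := rfl
  have w3 : (3 : ZMod 4).val = 3 := rfl
  have n1 : (1 : ZMod 4) ≠ 0 := by decide
  have n2 : (2 : ZMod 4) ≠ 0 := by decide
  have n3 : (3 : ZMod 4) ≠ 0 := by decide
  have n12 : (1 : ZMod 4) ≠ 2 := by decide
  have n32 : (3 : ZMod 4) ≠ 2 := by decide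
  rcases zmod4_cases (c j) with h | h | h | h <;> rw [h] <;>
    simp [phi, w1, w2, w3, v1, v3, n1, n2, n3, n12, n32]

lemma smul_of_mul_eq {σ : Type*} {S T : MvPolynomial σ ℚ} {q : ℚ} (hq : q ≠ 0)
    (h : C q * (C q * S) = C q * T) : S = q⁻¹ • T := by
  have hc : (C q : MvPolynomial σ ℚ) ≠ 0 := by simpa using hq
  rw [← mul_left_cancel₀ hc h, smul_eq_C_mul, ← mul_assoc, ← map_mul, inv_mul_cancel₀ hq, map_one,
    one_mul]

/-- The enumerator of the row space of good rows, in the form asserted. -/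
lemma Good.conclude {ρ : Fin 12 → V4} (h : Good ρ) :
    (∑ m, ∏ j, phi (X 0 : MvPolynomial (Fin 3) ℚ) (X 1) (X 2) (E ρ m j)) =
      ((2 : ℚ) ^ 12)⁻¹ • Fb (2 * X 0) (X 2 - X 1) (X 2 + X 1) := by
  have h1 := h.swe_formula (X 0 : MvPolynomial (Fin 3) ℚ) (X 1) (X 2)
  have h3 : C ((2 : ℚ) ^ 12) = (2 : MvPolynomial (Fin 3) ℚ) ^ 12 := by
    rw [map_pow]; rfl
  refine smul_of_mul_eq (by norm_num) ?_
  have h4 : (2 : MvPolynomial (Fin 3) ℚ) ^ 12 * 2 ^ 12 = 2 ^ 24 := by ring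
  rw [h3, ← mul_assoc, h4, h1]
  refine congrArg _ ?_
  generalize (2 * X 0 : MvPolynomial (Fin 3) ℚ) = a
  generalize (X 2 - X 1 : MvPolynomial (Fin 3) ℚ) = b
  generalize (X 2 + X 1 : MvPolynomial (Fin 3) ℚ) = d
  simp only [tau, Fb, Pb, Qb]
  norm_num
  ring

end QGolay

/-- The symmetrized weight enumerator of the extended quaternary Golay code. -/
theorem stmt_11 (g : Polynomial (ZMod 2)) (hg : IsQRFactor 2 g)
    (g2 : Polynomial (ZMod 4)) (C2 : Submodule (ZMod 4) (Fin 24 → ZMod 4))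
    (hC2 : IsLiftedQR (by norm_num : (2:ℕ) ∣ 4) g g2 C2) :
    swe 2 2 C2 = ((2:ℚ) ^ 12)⁻¹ • Fb (2 * X 0) (X 2 - X 1) (X 2 + X 1) := by
  obtain ⟨hmon, hdeg, hdvd, hmap, hC⟩ := hC2
  have hswe : swe 2 2 C2 = ∑ c : QGolay.V4, if c ∈ C2 then
      ∏ j, QGolay.phi (X 0 : MvPolynomial (Fin 3) ℚ) (X 1) (X 2) (c j) else 0 := by
    refine Finset.sum_congr rfl fun c _ => ?_
    split_ifs
    · exact QGolay.swe_term (fun i => (X i : MvPolynomial (Fin 3) ℚ)) c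
    · rfl
  have : Fact (1 < 4) := ⟨by norm_num⟩
  have hX : (Polynomial.X - 1 : Polynomial (ZMod 4)).Monic := Polynomial.monic_X_sub_C (1 : ZMod 4)
  have hXd : (Polynomial.X - 1 : Polynomial (ZMod 4)).natDegree = 1 :=
    Polynomial.natDegree_X_sub_C (1 : ZMod 4)
  have ha : QGolay.cf (1777, 2787) 11 = 1 := by decide
  have hb : QGolay.cf (1155, 3189) 11 = 1 := by decide
  rw [hswe]
  rcases QGolay.generator_cases hg hmon hdeg hdvd hmap with rfl | rfl
  · rw [QGolay.sum_code QGolay.shift_a ha (hX.mul (QGolay.monic_gpoly hb))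
      (by rw [hX.natDegree_mul (QGolay.monic_gpoly hb), hXd, QGolay.natDegree_gpoly hb])
      (by rw [← QGolay.factor]; ring) hC]
    exact QGolay.good_a.conclude
  · rw [QGolay.sum_code QGolay.shift_b hb (hX.mul (QGolay.monic_gpoly ha))
      (by rw [hX.natDegree_mul (QGolay.monic_gpoly ha), hXd, QGolay.natDegree_gpoly ha])
      (by rw [← QGolay.factor]; ring) hC]
    exact QGolay.good_b.conclude
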